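/- Let G be a group such that the center Z(G) has finite index m in G. Then the commutator subgroup G′ is finite, and its order is bounded by a function of m. -/

import Mathlib

universe u

lemma commutatorSet_subset_range_out (G : Type u) [Group G] :
    commutatorSet G ⊆ Set.range
      (fun p : (G ⧸ Subgroup.center G) × (G ⧸ Subgroup.center G) => p.1.out * p.2.out * p.1.out⁻¹ * p.2.out⁻¹) := by
  rintro _ ⟨a, b, rfl⟩
  refine ⟨((a : G ⧸ Subgroup.center G), (b : G ⧸ Subgroup.center G)), ?_⟩
  obtain ⟨⟨z, hz⟩, h1⟩ := QuotientGroup.mk_out_eq_mul (Subgroup.center G) a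
  obtain ⟨⟨w, hw⟩, h2⟩ := QuotientGroup.mk_out_eq_mul (Subgroup.center G) b
  simp only [h1, h2]
  rw [Subgroup.mem_center_iff] at hz hw
  simp only [commutatorElement_def, mul_inv_rev]
  calc a * z * (b * w) * (z⁻¹ * a⁻¹) * (w⁻¹ * b⁻¹)
      = a * (z * (b * w)) * z⁻¹ * a⁻¹ * w⁻¹ * b⁻¹ := by group
    _ = a * b * (w * a⁻¹) * w⁻¹ * b⁻¹ := by rw [← hz (b * w)]; group
    _ = a * b * a⁻¹ * b⁻¹ := by rw [← hw a⁻¹]; group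

/-- Schur–Wiegold: if the center has finite index `m`, the derived subgroup is finite of
`m`-bounded order. -/
theorem schur_wiegold : ∃ f : ℕ → ℕ, ∀ (G : Type u) [inst : Group G] (m : ℕ),
    (Subgroup.center G).index = m → m ≠ 0 →
    Finite (commutator G) ∧ Nat.card (commutator G) ≤ f m := by
  refine ⟨fun m => m ^ (m * (m * m) + 1), ?_⟩
  intro G _ m hm h0
  have hfi : (Subgroup.center G).FiniteIndex := ⟨by rwa [hm]⟩
  have hfin : Finite (G ⧸ Subgroup.center G) := Subgroup.finite_quotient_of_finiteIndex
  have hsub := commutatorSet_subset_range_out G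
  have hf : Finite (commutatorSet G) := ((Set.finite_range _).subset hsub).to_subtype
  refine ⟨inferInstance, ?_⟩
  have hcard : Nat.card (commutatorSet G) ≤ m * m := by
    refine (Nat.card_mono (Set.finite_range _) hsub).trans ?_
    refine (Finite.card_range_le _).trans ?_
    rw [Nat.card_prod, ← Subgroup.index_eq_card, hm]
  have hd := Subgroup.card_commutator_dvd_index_center_pow G
  rw [hm] at hd
  refine (Nat.le_of_dvd (pow_pos (Nat.pos_of_ne_zero h0) _) hd).trans ?_
  exact Nat.pow_le_pow_right (Nat.pos_of_ne_zero h0)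
    (Nat.add_le_add_right (Nat.mul_le_mul_left m hcard) 1)
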